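/- arXiv:1207.5747 — 2 statements merged into one kernel-verified Lean document; each statement's English description precedes it below -/
import Mathlib

section
/- If N > σ0 and σ0 is an integer, then an integer m ∈ {0, 1, …, N} is a pure Nash equilibrium of the parking spot selection game if and only if m = σ0 or m = σ0 − 1. -/
/-!
Competing means winning a public spot with probability `p = min 1 (R / k)`, and it costs at most `β`
exactly when `p` is at least `(γ - β) / (γ - 1)`. Since `1 < β`, this critical probability is below
`1`, so the cap in `p` plays no role in the comparison and the condition becomes `k ≤ σ₀`. When
`m` drivers compete, the competitors are content iff `m ≤ σ₀`, and the other drivers, if any, iff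
`σ₀ ≤ m + 1`: an integer `σ₀ < N` leaves exactly the two values `σ₀ - 1` and `σ₀`.
-/

section Equilibrium

/-- Pure Nash equilibrium of the game in which `N` players each choose between a fixed cost `β` and
competing, where `W k` is the cost of competing among `k` competitors. The game is symmetric, so a
strategy profile is encoded by its number `m` of competitors. -/
def IsNashEquilibrium {C : Type*} [LE C] (W : ℕ → C) (β : C) (N m : ℕ) : Prop :=
  m ≤ N ∧ (1 ≤ m → W m ≤ β) ∧ (m < N → β ≤ W (m + 1))

variable {C K : Type*} [LE C] {W : ℕ → C} {β : C} {N m : ℕ}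

theorem isNashEquilibrium_iff_of_threshold [AddMonoidWithOne K] [LE K] {σ : K} (hσ : 0 ≤ σ)
    (hle : ∀ k : ℕ, 1 ≤ k → (W k ≤ β ↔ (k : K) ≤ σ))
    (hge : ∀ k : ℕ, 1 ≤ k → (β ≤ W k ↔ σ ≤ (k : K))) :
    IsNashEquilibrium W β N m ↔ m ≤ N ∧ (m : K) ≤ σ ∧ (m < N → σ ≤ (m + 1 : ℕ)) := by
  have competitors_content : (1 ≤ m → W m ≤ β) ↔ (m : K) ≤ σ := by
    rcases Nat.eq_zero_or_pos m with rfl | hm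
    · simpa using hσ
    · rw [← hle m hm]
      exact forall_prop_of_true hm
  rw [IsNashEquilibrium, competitors_content, hge (m + 1) (Nat.le_add_left 1 m)]

theorem isNashEquilibrium_iff_of_natCast_threshold [AddMonoidWithOne K] [PartialOrder K]
    [AddLeftMono K] [ZeroLEOneClass K] [CharZero K] {n : ℕ} (hn : n ≤ N)
    (hle : ∀ k : ℕ, 1 ≤ k → (W k ≤ β ↔ (k : K) ≤ n))
    (hge : ∀ k : ℕ, 1 ≤ k → (β ≤ W k ↔ (n : K) ≤ k)) :
    IsNashEquilibrium W β N m ↔ m = n ∨ m = n - 1 := by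
  rw [isNashEquilibrium_iff_of_threshold (Nat.cast_nonneg' n) hle hge, Nat.cast_le, Nat.cast_le]
  omega

end Equilibrium

section Cost

variable {K : Type*} [Field K]

/-- Expected cost of competing when `k` drivers compete for `R` public spots of fee `1`, the losers
paying `γ`. The arguments are scalars rather than naturals, and division makes the value at `k = 0`
equal to the meaningless `γ`; it never enters the equilibrium conditions. -/
def competingCost [LinearOrder K] (R γ k : K) : K :=
  min 1 (R / k) + (1 - min 1 (R / k)) * γ

/-- The number `σ₀` of competitors, in general not an integer, at which competing for `R` spots
costs exactly as much as a private spot of cost `β`. -/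
def criticalLoad (R β γ : K) : K :=
  R * (γ - 1) / (γ - β)

variable [LinearOrder K] [IsStrictOrderedRing K] {R β γ k p : K}

theorem add_one_sub_mul_le_iff (hγ : 1 < γ) :
    p + (1 - p) * γ ≤ β ↔ (γ - β) / (γ - 1) ≤ p := by
  rw [div_le_iff₀ (sub_pos.mpr hγ)]
  constructor <;> intro h <;> linarith

theorem le_add_one_sub_mul_iff (hγ : 1 < γ) :
    β ≤ p + (1 - p) * γ ↔ p ≤ (γ - β) / (γ - 1) := by
  rw [le_div_iff₀ (sub_pos.mpr hγ)]
  constructor <;> intro h <;> linarith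

theorem competingCost_le_iff (hβ : 1 ≤ β) (hβγ : β < γ) (hk : 0 < k) :
    competingCost R γ k ≤ β ↔ k ≤ criticalLoad R β γ := by
  have hγ : 1 < γ := hβ.trans_lt hβγ
  have hcrit : (γ - β) / (γ - 1) ≤ 1 :=
    div_le_one_of_le₀ (sub_le_sub_left hβ γ) (sub_pos.mpr hγ).le
  calc competingCost R γ k ≤ β
      ↔ (γ - β) / (γ - 1) ≤ min 1 (R / k) := add_one_sub_mul_le_iff hγ
    _ ↔ (γ - β) / (γ - 1) ≤ R / k := by rw [le_min_iff, and_iff_right hcrit]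
    _ ↔ (γ - β) * k ≤ R * (γ - 1) := div_le_div_iff₀ (sub_pos.mpr hγ) hk
    _ ↔ k ≤ criticalLoad R β γ := by
      rw [criticalLoad, le_div_iff₀' (sub_pos.mpr hβγ)]

theorem le_competingCost_iff (hβ : 1 < β) (hβγ : β < γ) (hk : 0 < k) :
    β ≤ competingCost R γ k ↔ criticalLoad R β γ ≤ k := by
  have hγ : 1 < γ := hβ.trans hβγ
  have hcrit : (γ - β) / (γ - 1) < 1 :=
    (div_lt_one (sub_pos.mpr hγ)).mpr (sub_lt_sub_left hβ γ)
  calc β ≤ competingCost R γ k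
      ↔ min 1 (R / k) ≤ (γ - β) / (γ - 1) := le_add_one_sub_mul_iff hγ
    _ ↔ R / k ≤ (γ - β) / (γ - 1) := by rw [min_le_iff, or_iff_right hcrit.not_ge]
    _ ↔ R * (γ - 1) ≤ (γ - β) * k := div_le_div_iff₀ hk (sub_pos.mpr hγ)
    _ ↔ criticalLoad R β γ ≤ k := by
      rw [criticalLoad, div_le_iff₀' (sub_pos.mpr hβγ)]

theorem stmt_3_general {N n m : ℕ} (hβ : 1 < β) (hβγ : β < γ) (hn : n = criticalLoad R β γ)
    (hnN : n ≤ N) :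
    IsNashEquilibrium (fun k : ℕ ↦ competingCost R γ k) β N m ↔ m = n ∨ m = n - 1 := by
  apply isNashEquilibrium_iff_of_natCast_threshold (K := K) hnN <;> intro k hk <;> rw [hn]
  · exact competingCost_le_iff hβ.le hβγ (Nat.cast_pos.mpr hk)
  · exact le_competingCost_iff hβ hβγ (Nat.cast_pos.mpr hk)

end Cost

/-- If N > σ0 and σ0 is an integer (σ0 = m0 ∈ ℕ), then m ∈ {0,…,N} is a pure
Nash equilibrium iff m = σ0 or m = σ0 − 1. -/
theorem stmt_3 (N R : ℕ) (hN : 1 < N) (hR : 1 ≤ R)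
    (β γ δ σ0 : ℝ) (hβ : 1 < β) (hβγ : β < γ)
    (hδ : δ = γ - β) (hσ0 : σ0 = R * (γ - 1) / δ)
    (W : ℕ → ℝ)
    (hW : ∀ k : ℕ, W k = min 1 ((R : ℝ) / (k : ℝ)) + (1 - min 1 ((R : ℝ) / (k : ℝ))) * γ)
    (isNE : ℕ → Prop)
    (hNE : ∀ m : ℕ, isNE m ↔ m ≤ N ∧ (1 ≤ m → W m ≤ β) ∧ (m < N → β ≤ W (m + 1)))
    (hlt : σ0 < (N : ℝ)) (m0 : ℕ) (hint : (m0 : ℝ) = σ0) :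
    ∀ m : ℕ, m ≤ N → (isNE m ↔ m = m0 ∨ m = m0 - 1) := by
  obtain rfl : W = fun k : ℕ ↦ competingCost (R : ℝ) γ k := funext hW
  have hm0 : (m0 : ℝ) = criticalLoad (R : ℝ) β γ := by rw [hint, hσ0, hδ, criticalLoad]
  have hm0N : m0 ≤ N := Nat.cast_le.mp (hint.trans_lt hlt).le
  exact fun m _ ↦ (hNE m).trans (stmt_3_general hβ hβγ hm0 hm0N)
end

section
/- The social cost function m ↦ C(m) on {0, 1, …, N} attains its minimum uniquely at m = min(N, R), and the minimum (optimal) value equals C_opt = min(N, R) + β·max(0, N − R). -/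
/-!
With `m` competitors, `min m R` of the public spots are used, so replacing the optimal number
`min N R` of competitors by `m` loses `β - 1` for each of the `min N R - min m R` wasted spots and
`γ - β` for each of the `m - min m R` drivers who compete in vain. Both losses are nonnegative, and
they vanish together only if `m = min m R = min N R`.
-/

section SocialCost

variable {K : Type*} [Field K] [LinearOrder K]

/-- The expected cost `W(k)` of competing for `R` public spots (fee `1`) against a penalty `γ` when
there are `k` competitors. Here `R` and `k` may be fractional; at `k = 0` the value is the junk
value `γ`, which `socialCost` multiplies by `0`. -/
def competitionCost (R γ k : K) : K :=
  min 1 (R / k) + (1 - min 1 (R / k)) * γ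

/-- The social cost `C(m)` when `m` of the `N` drivers compete for `R` public spots and the other
`N - m` pay `β` for private parking, for possibly fractional `N`, `R` and `m`. -/
def socialCost (N R β γ m : K) : K :=
  m * competitionCost R γ m + (N - m) * β

variable [IsStrictOrderedRing K] {N R β γ m : K}

lemma mul_min_one_div (hm : 0 ≤ m) (hR : 0 ≤ R) : m * min 1 (R / m) = min m R := by
  rcases hm.eq_or_lt with rfl | hm_pos
  · rw [zero_mul, min_eq_left hR]
  · rw [mul_min_of_nonneg _ _ hm, mul_one, mul_div_cancel₀ R hm_pos.ne']

lemma mul_competitionCost (γ : K) (hm : 0 ≤ m) (hR : 0 ≤ R) :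
    m * competitionCost R γ m = min m R + (m - min m R) * γ := by
  rw [competitionCost, ← mul_min_one_div hm hR]
  ring

lemma socialCost_of_le (N β γ : K) (hm : 0 ≤ m) (hmR : m ≤ R) :
    socialCost N R β γ m = m + β * (N - m) := by
  rw [socialCost, mul_competitionCost γ hm (hm.trans hmR), min_eq_left hmR]
  ring

lemma socialCost_min (β γ : K) (hN : 0 ≤ N) (hR : 0 ≤ R) :
    socialCost N R β γ (min N R) = min N R + β * max 0 (N - R) := by
  rw [socialCost_of_le N β γ (le_min hN hR) (min_le_right N R), ← max_sub_sub_left, sub_self]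

lemma socialCost_sub_socialCost_min (β γ : K) (hN : 0 ≤ N) (hR : 0 ≤ R) (hm : 0 ≤ m) :
    socialCost N R β γ m - socialCost N R β γ (min N R) =
      (β - 1) * (min N R - min m R) + (γ - β) * (m - min m R) := by
  rw [socialCost_of_le N β γ (le_min hN hR) (min_le_right N R), socialCost,
    mul_competitionCost γ hm hR]
  ring

lemma socialCost_min_le (hR : 0 ≤ R) (hβ : 1 ≤ β) (hβγ : β ≤ γ) (hm : m ∈ Set.Icc 0 N) :
    socialCost N R β γ (min N R) ≤ socialCost N R β γ m := by
  rw [← sub_nonneg, socialCost_sub_socialCost_min β γ (hm.1.trans hm.2) hR hm.1]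
  have spots_wasted : 0 ≤ min N R - min m R := sub_nonneg.2 (min_le_min_right R hm.2)
  have drivers_unserved : 0 ≤ m - min m R := sub_nonneg.2 (min_le_left m R)
  exact add_nonneg (mul_nonneg (sub_nonneg.2 hβ) spots_wasted)
    (mul_nonneg (sub_nonneg.2 hβγ) drivers_unserved)

lemma socialCost_min_lt (hR : 0 ≤ R) (hβ : 1 < β) (hβγ : β < γ) (hm : m ∈ Set.Icc 0 N)
    (hne : m ≠ min N R) :
    socialCost N R β γ (min N R) < socialCost N R β γ m := by
  rw [← sub_pos, socialCost_sub_socialCost_min β γ (hm.1.trans hm.2) hR hm.1]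
  rcases le_or_gt m R with hmR | hRm
  · rw [min_eq_left hmR, sub_self, mul_zero, add_zero]
    exact mul_pos (sub_pos.2 hβ) (sub_pos.2 ((le_min hm.2 hmR).lt_of_ne hne))
  · rw [min_eq_right hRm.le, min_eq_right (hRm.le.trans hm.2), sub_self, mul_zero, zero_add]
    exact mul_pos (sub_pos.2 hβγ) (sub_pos.2 hRm)

theorem stmt_5_general (hN : 0 ≤ N) (hR : 0 ≤ R) (hβ : 1 < β) (hβγ : β < γ) :
    (∀ m ∈ Set.Icc 0 N, socialCost N R β γ (min N R) ≤ socialCost N R β γ m) ∧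
    (∀ m ∈ Set.Icc 0 N, m ≠ min N R →
      socialCost N R β γ (min N R) < socialCost N R β γ m) ∧
    socialCost N R β γ (min N R) = min N R + β * max 0 (N - R) :=
  ⟨fun _ hm ↦ socialCost_min_le hR hβ.le hβγ.le hm,
    fun _ hm hne ↦ socialCost_min_lt hR hβ hβγ hm hne, socialCost_min β γ hN hR⟩

end SocialCost

/-- The social cost m ↦ C(m) on {0,…,N} attains its minimum uniquely at
m = min(N,R), with minimum value C_opt = min(N,R) + β·max(0, N − R). -/
theorem stmt_5 (N R : ℕ) (hN : 1 < N) (hR : 1 ≤ R)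
    (β γ : ℝ) (hβ : 1 < β) (hβγ : β < γ)
    (W : ℕ → ℝ)
    (hW : ∀ k : ℕ, W k = min 1 ((R : ℝ) / (k : ℝ)) + (1 - min 1 ((R : ℝ) / (k : ℝ))) * γ)
    (C : ℕ → ℝ) (hC0 : C 0 = (N : ℝ) * β)
    (hC : ∀ m : ℕ, 1 ≤ m → C m = (m : ℝ) * W m + ((N : ℝ) - (m : ℝ)) * β) :
    (∀ m : ℕ, m ≤ N → C (min N R) ≤ C m) ∧
    (∀ m : ℕ, m ≤ N → m ≠ min N R → C (min N R) < C m) ∧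
    C (min N R) = (min N R : ℝ) + β * max 0 ((N : ℝ) - (R : ℝ)) := by
  have C_eq_socialCost (m : ℕ) : C m = socialCost (N : ℝ) R β γ m := by
    rcases m.eq_zero_or_pos with rfl | hm
    · simp [hC0, socialCost]
    · rw [hC m hm, hW, socialCost, competitionCost]
  have mem_Icc {m : ℕ} (hm : m ≤ N) : (m : ℝ) ∈ Set.Icc (0 : ℝ) N :=
    ⟨m.cast_nonneg, mod_cast hm⟩
  obtain ⟨min_le, min_lt, min_value⟩ :=
    stmt_5_general (N.cast_nonneg : (0 : ℝ) ≤ N) R.cast_nonneg hβ hβγ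
  simp only [C_eq_socialCost, Nat.cast_min]
  exact ⟨fun m hm ↦ min_le m (mem_Icc hm),
    fun m hm hne ↦ min_lt m (mem_Icc hm) (mod_cast hne), min_value⟩
end
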